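/- Let n ≥ 2, let ξ be a real number with 1 ≤ ξ ≤ n−1, and let K ∈ ℝ^{n×n} have all entries positive. Let ρ ∈ ℝⁿ with ρ_i ≥ 1 for all i, and define Q by Q_ij = K_ij^{1/ρ_i} / ∑_ℓ K_iℓ^{1/ρ_i}. Suppose that H(Q_{i:}) ≥ log ξ + 1 for every i, and that H(Q_{i:}) = log ξ + 1 for every i with ρ_i > 1. Then Q is the unique minimizer of P ↦ KL(P|K) over H_ξ. -/

import Mathlib

open Finset

/-- Entropy of a nonnegative vector, with the convention `0 * log 0 = 0`. -/
noncomputable def ent {n : ℕ} (p : Fin n → ℝ) : ℝ :=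
  -∑ i, p i * (Real.log (p i) - 1)

/-- Membership in the set `H_ξ`. -/
def Hxi {n : ℕ} (ξ : ℝ) (P : Fin n → Fin n → ℝ) : Prop :=
  (∀ i j, 0 ≤ P i j) ∧ (∀ i, ∑ j, P i j = 1) ∧ (∀ i, Real.log ξ + 1 ≤ ent (P i))

/-- Kullback–Leibler divergence, with the convention `0 * log 0 = 0`. -/
noncomputable def klDiv {n : ℕ} (P K : Fin n → Fin n → ℝ) : ℝ :=
  ∑ i, ∑ j, P i j * (Real.log (P i j / K i j) - 1)

/-!
The problem decouples into rows. For a row `k` of `K` and `s = 1 / ρ ∈ (0, 1]`, the row `q` of `Q`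
is the escort distribution `k ^ s / ∑ k ^ s`. Its logarithm is affine in `log k` with slope `s`, and
this gives, for every probability vector `p`, the Pythagorean identity
`KL(p|q) + 1 = s (KL(p|k) - KL(q|k)) - (1 - s) (H(p) - H(q))`.
The left side is nonnegative and vanishes only at `p = q` (Gibbs' inequality), and the last term has
a sign by complementary slackness: either `s = 1`, or `H(q)` is the least entropy allowed to `p`.
-/

section Rows

variable {κ : Type*} [Fintype κ]

/-- The entropy `H(p)` of a vector over any finite index type; `ent` is the case of `Fin n`. -/
noncomputable def entropy (p : κ → ℝ) : ℝ :=
  -∑ j, p j * (Real.log (p j) - 1)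

/-- The Kullback–Leibler divergence `KL(p|k)` of two vectors, normalized as in `klDiv`, which is the
sum of the divergences of the rows. For positive `k` its minimum over nonnegative `p` is `-∑ j, k j`
rather than `0`. -/
noncomputable def relEntropy (p k : κ → ℝ) : ℝ :=
  ∑ j, p j * (Real.log (p j / k j) - 1)

/-- The escort distribution of order `s` of a positive vector `k`, that is, `k ^ s` normalized to a
probability vector. The order is the exponent itself, so the rows of `Q` have order `1 / ρ i`. -/
noncomputable def escort (s : ℝ) (k : κ → ℝ) (j : κ) : ℝ :=
  k j ^ s / ∑ l, k l ^ s

lemma relEntropy_add_sum {p q : κ → ℝ} (hq : ∀ j, q j ≠ 0) :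
    relEntropy p q + ∑ j, q j = ∑ j, q j * InformationTheory.klFun (p j / q j) := by
  rw [relEntropy, ← sum_add_distrib]
  refine sum_congr rfl fun j _ => ?_
  have hqj := hq j
  rw [InformationTheory.klFun_apply]
  field_simp
  ring

lemma relEntropy_self (q : κ → ℝ) : relEntropy q q = -∑ j, q j := by
  rw [relEntropy, ← sum_neg_distrib]
  refine sum_congr rfl fun j _ => ?_
  rcases eq_or_ne (q j) 0 with hqj | hqj
  · simp [hqj]
  · simp [div_self hqj]

lemma neg_sum_le_relEntropy {p q : κ → ℝ} (hp : ∀ j, 0 ≤ p j) (hq : ∀ j, 0 < q j) :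
    -∑ j, q j ≤ relEntropy p q := by
  rw [neg_le_iff_add_nonneg, relEntropy_add_sum fun j => (hq j).ne']
  exact sum_nonneg fun j _ => mul_nonneg (hq j).le
    (InformationTheory.klFun_nonneg (div_nonneg (hp j) (hq j).le))

lemma relEntropy_eq_neg_sum_iff {p q : κ → ℝ} (hp : ∀ j, 0 ≤ p j) (hq : ∀ j, 0 < q j) :
    relEntropy p q = -∑ j, q j ↔ p = q := by
  have hdiv : ∀ j, 0 ≤ p j / q j := fun j => div_nonneg (hp j) (hq j).le
  rw [eq_neg_iff_add_eq_zero, relEntropy_add_sum fun j => (hq j).ne',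
    sum_eq_zero_iff_of_nonneg fun j _ =>
      mul_nonneg (hq j).le (InformationTheory.klFun_nonneg (hdiv j)), funext_iff]
  simp [InformationTheory.klFun_eq_zero_iff (hdiv _), (hq _).ne', div_eq_one_iff_eq]

lemma sum_rpow_pos [Nonempty κ] {k : κ → ℝ} (hk : ∀ j, 0 < k j) (s : ℝ) : 0 < ∑ j, k j ^ s :=
  sum_pos (fun j _ => Real.rpow_pos_of_pos (hk j) s) univ_nonempty

lemma escort_pos {k : κ → ℝ} (hk : ∀ j, 0 < k j) (s : ℝ) (j : κ) : 0 < escort s k j :=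
  have : Nonempty κ := ⟨j⟩
  div_pos (Real.rpow_pos_of_pos (hk j) s) (sum_rpow_pos hk s)

lemma sum_escort [Nonempty κ] {k : κ → ℝ} (hk : ∀ j, 0 < k j) (s : ℝ) :
    ∑ j, escort s k j = 1 := by
  simp only [escort, ← sum_div, div_self (sum_rpow_pos hk s).ne']

lemma log_escort {k : κ → ℝ} (hk : ∀ j, 0 < k j) (s : ℝ) (j : κ) :
    Real.log (escort s k j) = s * Real.log (k j) - Real.log (∑ l, k l ^ s) := by
  have : Nonempty κ := ⟨j⟩
  rw [escort, Real.log_div (Real.rpow_pos_of_pos (hk j) s).ne' (sum_rpow_pos hk s).ne',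
    Real.log_rpow (hk j)]

lemma relEntropy_escort_right {k : κ → ℝ} (hk : ∀ j, 0 < k j) (s : ℝ) (p : κ → ℝ) :
    relEntropy p (escort s k) =
      s * relEntropy p k - (1 - s) * entropy p + Real.log (∑ l, k l ^ s) * ∑ j, p j := by
  simp only [relEntropy, entropy, mul_neg, sub_neg_eq_add, mul_sum, ← sum_add_distrib]
  refine sum_congr rfl fun j _ => ?_
  rcases eq_or_ne (p j) 0 with hpj | hpj
  · simp [hpj]
  · rw [Real.log_div hpj (escort_pos hk s j).ne', Real.log_div hpj (hk j).ne', log_escort hk]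
    ring

lemma relEntropy_escort_pythagorean [Nonempty κ] {k p : κ → ℝ} (hk : ∀ j, 0 < k j) (s : ℝ)
    (hp : ∑ j, p j = 1) :
    relEntropy p (escort s k) + 1 =
      s * (relEntropy p k - relEntropy (escort s k) k)
        - (1 - s) * (entropy p - entropy (escort s k)) := by
  have h_p := relEntropy_escort_right hk s p
  have h_escort := relEntropy_escort_right hk s (escort s k)
  rw [relEntropy_self, sum_escort hk] at h_escort
  rw [hp] at h_p
  linear_combination h_p - h_escort

lemma relEntropy_escort_right_add_one_le [Nonempty κ] {k p : κ → ℝ} {s : ℝ} (hk : ∀ j, 0 < k j)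
    (hs : s ≤ 1) (hp : ∑ j, p j = 1) (hent : s < 1 → entropy (escort s k) ≤ entropy p) :
    relEntropy p (escort s k) + 1 ≤ s * (relEntropy p k - relEntropy (escort s k) k) := by
  rw [relEntropy_escort_pythagorean hk s hp, sub_le_self_iff]
  rcases hs.eq_or_lt with rfl | hs
  · simp
  · exact mul_nonneg (sub_nonneg.2 hs.le) (sub_nonneg.2 (hent hs))

lemma relEntropy_escort_left_le [Nonempty κ] {k p : κ → ℝ} {s : ℝ} (hk : ∀ j, 0 < k j)
    (hs₀ : 0 < s) (hs₁ : s ≤ 1) (hp : p ∈ stdSimplex ℝ κ)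
    (hent : s < 1 → entropy (escort s k) ≤ entropy p) :
    relEntropy (escort s k) k ≤ relEntropy p k := by
  have gibbs := neg_sum_le_relEntropy hp.1 (escort_pos hk s)
  rw [sum_escort hk] at gibbs
  have gap := relEntropy_escort_right_add_one_le hk hs₁ hp.2 hent
  exact sub_nonneg.1 (nonneg_of_mul_nonneg_right (by linarith) hs₀)

lemma eq_escort_of_relEntropy_eq [Nonempty κ] {k p : κ → ℝ} {s : ℝ} (hk : ∀ j, 0 < k j)
    (hs : s ≤ 1) (hp : p ∈ stdSimplex ℝ κ) (hent : s < 1 → entropy (escort s k) ≤ entropy p)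
    (heq : relEntropy p k = relEntropy (escort s k) k) :
    p = escort s k := by
  have gibbs := neg_sum_le_relEntropy hp.1 (escort_pos hk s)
  have gap := relEntropy_escort_right_add_one_le hk hs hp.2 hent
  rw [heq, sub_self, mul_zero] at gap
  rw [← relEntropy_eq_neg_sum_iff hp.1 (escort_pos hk s)]
  rw [sum_escort hk] at gibbs ⊢
  linarith

end Rows

section Matrices

variable {ι κ : Type*} [Fintype κ]

/-- The row-stochastic matrices, possibly rectangular, whose `i`-th row has entropy at least `η i`.
The set `H_ξ` is the square case with constant level `η i = log ξ + 1`. -/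
def entropicStochastic (η : ι → ℝ) : Set (ι → κ → ℝ) :=
  {P | (∀ i j, 0 ≤ P i j) ∧ (∀ i, ∑ j, P i j = 1) ∧ ∀ i, η i ≤ entropy (P i)}

theorem kl_projection_onto_Hxi_general [Fintype ι] [Nonempty κ] {η : ι → ℝ}
    {K : ι → κ → ℝ} (hK : ∀ i j, 0 < K i j) {ρ : ι → ℝ} (hρ : ∀ i, 1 ≤ ρ i)
    {Q : ι → κ → ℝ} (hQ : ∀ i j, Q i j = escort (1 / ρ i) (K i) j)
    (hent : ∀ i, η i ≤ entropy (Q i)) (hsat : ∀ i, 1 < ρ i → entropy (Q i) = η i) :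
    Q ∈ entropicStochastic η ∧
      (∀ P ∈ entropicStochastic η,
        ∑ i, relEntropy (Q i) (K i) ≤ ∑ i, relEntropy (P i) (K i)) ∧
      (∀ P ∈ entropicStochastic η,
        ∑ i, relEntropy (P i) (K i) = ∑ i, relEntropy (Q i) (K i) → P = Q) := by
  obtain rfl : Q = fun i => escort (1 / ρ i) (K i) := funext₂ hQ
  have hρ_pos : ∀ i, 0 < ρ i := fun i => one_pos.trans_le (hρ i)
  have hs₁ : ∀ i, 1 / ρ i ≤ 1 := fun i => (div_le_one (hρ_pos i)).2 (hρ i)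
  have hslack : ∀ P ∈ entropicStochastic (κ := κ) η, ∀ i, 1 / ρ i < 1 →
      entropy (escort (1 / ρ i) (K i)) ≤ entropy (P i) := fun P hP i hi =>
    (hsat i ((div_lt_one (hρ_pos i)).1 hi)).trans_le (hP.2.2 i)
  have hrow : ∀ P ∈ entropicStochastic η, ∀ i ∈ univ,
      relEntropy (escort (1 / ρ i) (K i)) (K i) ≤ relEntropy (P i) (K i) := fun P hP i _ =>
    relEntropy_escort_left_le (hK i) (one_div_pos.2 (hρ_pos i)) (hs₁ i) ⟨hP.1 i, hP.2.1 i⟩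
      (hslack P hP i)
  refine ⟨⟨fun i j => (escort_pos (hK i) _ j).le, fun i => sum_escort (hK i) _, hent⟩,
    fun P hP => sum_le_sum (hrow P hP), fun P hP heq => funext fun i => ?_⟩
  have hrow_eq := (sum_eq_sum_iff_of_le (hrow P hP)).1 heq.symm i (mem_univ i)
  exact eq_escort_of_relEntropy_eq (hK i) (hs₁ i) ⟨hP.1 i, hP.2.1 i⟩ (hslack P hP i) hrow_eq.symm

end Matrices

theorem kl_projection_onto_Hxi
    {n : ℕ} (hn : 2 ≤ n) (ξ : ℝ) (hξ1 : 1 ≤ ξ) (hξ2 : ξ ≤ (n : ℝ) - 1)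
    (K : Fin n → Fin n → ℝ) (hK : ∀ i j, 0 < K i j)
    (ρ : Fin n → ℝ) (hρ : ∀ i, 1 ≤ ρ i)
    (Q : Fin n → Fin n → ℝ)
    (hQ : ∀ i j, Q i j = K i j ^ (1 / ρ i) / ∑ l, K i l ^ (1 / ρ i))
    (hent : ∀ i, Real.log ξ + 1 ≤ ent (Q i))
    (hsat : ∀ i, 1 < ρ i → ent (Q i) = Real.log ξ + 1) :
    Hxi ξ Q ∧ (∀ P, Hxi ξ P → klDiv Q K ≤ klDiv P K) ∧
      (∀ P, Hxi ξ P → klDiv P K = klDiv Q K → P = Q) := by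
  have : NeZero n := ⟨by lia⟩
  exact kl_projection_onto_Hxi_general hK hρ hQ hent hsat
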